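/- For every pair of real numbers a > 0 and b ≥ 0, the set of real numbers c for which there exists a nonzero entire function w satisfying w''(z) + (a·z⁴ + b·z² − c)·w(z) = 0 for all z ∈ ℂ, such that w has infinitely many zeros and all but finitely many zeros of w are real, is infinite. -/

import Mathlib

open Complex Polynomial

open Filter Set Topology
open scoped ComplexConjugate

/-!
Let `w` be the even solution with `w 0 = 1`, which depends continuously on `c` and is real on both
coordinate axes. On the real axis `w'' = -(a x⁴ + b x² - c) w` oscillates: the Prüfer angle
(the polar angle of `(w', w)`) tends to infinity, which gives infinitely many zeros. On the
imaginary axis `y t = w (i t)` satisfies `y'' = (a t⁴ - b t² - c) y`. Its Prüfer angle ends up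
either in a quadrant where `y y' > 0`, which it then cannot leave, or in one where `y y' < 0`. The
first alternative is open in `c` and locks the number of half turns; as this number is unbounded
when `c` grows, the second alternative must occur for arbitrarily large `c`.

For such `c` there are no nonreal zeros far from the origin. By symmetry only the first quadrant
matters. Since `(w' conj w)' = -Q |w|² + |w'|²` along horizontal lines, where `w'' + Q w = 0`, the
quantity `Im (w' conj w)` increases away from the imaginary axis as long as `Im Q ≤ 0`, and it is
positive to begin with because `y y' < 0`; this covers the points far up with `6 x ≤ 5 y`. At the
remaining points `Im ((conj z)² w' conj w)` decreases strictly along lines of slope `2`, starting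
from `0` on the real axis, and so does not vanish again.
-/

section PowerSeries

variable {X : Type*}

/-- The sum `∑ qₙ(x) zⁿ` of a power series whose coefficients depend on a parameter `x`. -/
noncomputable def powerSum (q : ℕ → X → ℝ) (x : X) (z : ℂ) : ℂ := ∑' n, (q n x : ℂ) * z ^ n

/-- The coefficients of the termwise derivative of `∑ qₙ(x) zⁿ`. -/
def derivCoeff (q : ℕ → X → ℝ) (n : ℕ) (x : X) : ℝ := (n + 1) * q (n + 1) x

/-- The Taylor coefficients at `0` of the solution of `w'' = (∑ vₙ(x) zⁿ) w` with `w 0 = 1` and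
`w' 0 = 0`. -/
noncomputable def solutionCoeff (v : ℕ → X → ℝ) : ℕ → X → ℝ
  | 0, _ => 1
  | 1, _ => 0
  | n + 2, x =>
    (∑ k ∈ Finset.range (n + 1), v k x * solutionCoeff v (n - k) x) / ((n + 2) * (n + 1))

/-- A family of power series with coefficients continuous in the parameter and with infinite
radius of convergence, uniformly on compact sets of parameters. -/
structure IsEntireFamily [TopologicalSpace X] (q : ℕ → X → ℝ) : Prop where
  continuous_coeff (n : ℕ) : Continuous (q n)
  exists_bound {K : Set X} (hK : IsCompact K) {R : ℝ} (hR : 0 < R) :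
    ∃ M, ∀ n, ∀ x ∈ K, |q n x| * R ^ n ≤ M

lemma powerSum_zero (q : ℕ → X → ℝ) (x : X) : powerSum q x 0 = q 0 x := by
  rw [powerSum, tsum_eq_single 0 fun n hn => by simp [hn]]
  simp

lemma powerSum_conj (q : ℕ → X → ℝ) (x : X) (z : ℂ) :
    powerSum q x (conj z) = conj (powerSum q x z) := by
  simp [powerSum, conj_tsum]

lemma powerSum_neg_of_odd {q : ℕ → X → ℝ} {x : X} (hq : ∀ n, Odd n → q n x = 0) (z : ℂ) :
    powerSum q x (-z) = powerSum q x z := by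
  refine tsum_congr fun n => ?_
  rcases n.even_or_odd with hn | hn
  · rw [hn.neg_pow]
  · simp [hq n hn]

lemma derivCoeff_derivCoeff_solutionCoeff (v : ℕ → X → ℝ) (n : ℕ) (x : X) :
    derivCoeff (derivCoeff (solutionCoeff v)) n x =
      ∑ k ∈ Finset.range (n + 1), v k x * solutionCoeff v (n - k) x := by
  rw [derivCoeff, derivCoeff, solutionCoeff]
  push_cast
  field_simp
  ring

lemma solutionCoeff_eq_zero_of_odd {v : ℕ → X → ℝ} {x : X} (hv : ∀ n, Odd n → v n x = 0)
    (n : ℕ) (hn : Odd n) : solutionCoeff v n x = 0 := by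
  induction n using Nat.strong_induction_on with
  | _ n ih =>
    match n with
    | 0 => exact absurd hn (by decide)
    | 1 => rw [solutionCoeff]
    | n + 2 =>
      rw [solutionCoeff, Finset.sum_eq_zero, zero_div]
      intro k hk
      rcases k.even_or_odd with hk' | hk'
      · rw [ih (n - k) (by omega) (by grind), mul_zero]
      · rw [hv k hk', zero_mul]

lemma mul_abs_solutionCoeff_le {v : ℕ → X → ℝ} {x : X} {R M B : ℝ} (hR : 0 ≤ R) (hM : 0 ≤ M)
    (n : ℕ) (hv : ∀ k, |v k x| * R ^ k ≤ M)
    (hB : ∀ k ≤ n, |solutionCoeff v k x| * R ^ k ≤ B) :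
    (n + 2) * (|solutionCoeff v (n + 2) x| * R ^ (n + 2)) ≤ R ^ 2 * M * B := by
  have hsum : |∑ k ∈ Finset.range (n + 1), v k x * solutionCoeff v (n - k) x| * R ^ n
      ≤ (n + 1) * (M * B) := by
    calc |∑ k ∈ Finset.range (n + 1), v k x * solutionCoeff v (n - k) x| * R ^ n
        ≤ ∑ k ∈ Finset.range (n + 1), |v k x * solutionCoeff v (n - k) x| * R ^ n := by
          rw [← Finset.sum_mul]
          gcongr
          exact Finset.abs_sum_le_sum_abs _ _
      _ ≤ ∑ _k ∈ Finset.range (n + 1), M * B := by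
          refine Finset.sum_le_sum fun k hk => ?_
          have hkn : k ≤ n := Finset.mem_range_succ_iff.1 hk
          calc |v k x * solutionCoeff v (n - k) x| * R ^ n
              = (|v k x| * R ^ k) * (|solutionCoeff v (n - k) x| * R ^ (n - k)) := by
                rw [abs_mul, ← pow_mul_pow_sub R hkn]
                ring
            _ ≤ M * B := mul_le_mul (hv k) (hB _ (n.sub_le k)) (by positivity) hM
      _ = (n + 1) * (M * B) := by simp
  rw [solutionCoeff, abs_div, abs_of_pos (show (0 : ℝ) < (n + 2) * (n + 1) by positivity)]
  calc (n + 2) * (|∑ k ∈ Finset.range (n + 1), v k x * solutionCoeff v (n - k) x|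
        / ((n + 2) * (n + 1)) * R ^ (n + 2))
      = R ^ 2 * (|∑ k ∈ Finset.range (n + 1), v k x * solutionCoeff v (n - k) x| * R ^ n)
          / (n + 1) := by
        field_simp
        ring
    _ ≤ R ^ 2 * ((n + 1) * (M * B)) / (n + 1) := by gcongr
    _ = R ^ 2 * M * B := by field_simp

variable [TopologicalSpace X] {q v : ℕ → X → ℝ}

lemma continuous_solutionCoeff (hv : ∀ n, Continuous (v n)) (n : ℕ) :
    Continuous (solutionCoeff v n) := by
  induction n using Nat.strong_induction_on with
  | _ n ih =>
    match n with
    | 0 => simpa only [funext fun x => solutionCoeff.eq_1 v x] using continuous_const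
    | 1 => simpa only [funext fun x => solutionCoeff.eq_2 v x] using continuous_const
    | n + 2 =>
      simp only [funext fun x => solutionCoeff.eq_3 v x n]
      exact (continuous_finsetSum _ fun k _ => (hv k).mul (ih (n - k) (by omega))).div_const _

lemma exists_bound_of_lt (hq : ∀ n, Continuous (q n)) {K : Set X} (hK : IsCompact K) {R : ℝ}
    (hR : 0 ≤ R) (N : ℕ) : ∃ B ≥ 0, ∀ n < N, ∀ x ∈ K, |q n x| * R ^ n ≤ B := by
  obtain ⟨B, hB⟩ := hK.exists_bound_of_continuousOn
    (f := fun x => ∑ n ∈ Finset.range N, |q n x| * R ^ n)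
    (continuous_finsetSum _ fun n _ => (hq n).abs.mul_const _).continuousOn
  refine ⟨max B 0, le_max_right _ _, fun n hn x hx => le_max_of_le_left ?_⟩
  exact (Finset.single_le_sum (f := fun n => |q n x| * R ^ n) (fun _ _ => by positivity)
    (Finset.mem_range.2 hn)).trans ((le_abs_self _).trans (hB x hx))

namespace IsEntireFamily

lemma of_eq_zero {N : ℕ} (hq : ∀ n, Continuous (q n)) (hN : ∀ n ≥ N, ∀ x, q n x = 0) :
    IsEntireFamily q where
  continuous_coeff := hq
  exists_bound {K} hK {R} hR := by
    obtain ⟨B, hB₀, hB⟩ := exists_bound_of_lt hq hK hR.le N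
    refine ⟨B, fun n x hx => ?_⟩
    by_cases hn : n < N
    · exact hB n hn x hx
    · rwa [hN n (not_lt.1 hn), abs_zero, zero_mul]

lemma exists_summable_bound (hq : IsEntireFamily q) {K : Set X} (hK : IsCompact K) {R : ℝ}
    (hR : 0 < R) : ∃ u : ℕ → ℝ, Summable u ∧
      ∀ n, ∀ x ∈ K, ∀ z : ℂ, ‖z‖ ≤ R → ‖(q n x : ℂ) * z ^ n‖ ≤ u n := by
  obtain ⟨M, hM⟩ := hq.exists_bound hK (show 0 < 2 * R by positivity)
  refine ⟨fun n => M * (1 / 2) ^ n, summable_geometric_two.mul_left M, fun n x hx z hz => ?_⟩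
  rw [norm_mul, norm_pow, Complex.norm_real, Real.norm_eq_abs]
  calc |q n x| * ‖z‖ ^ n ≤ |q n x| * R ^ n := by gcongr
    _ = |q n x| * (2 * R) ^ n * (1 / 2) ^ n := by
        rw [mul_assoc, ← mul_pow]
        ring_nf
    _ ≤ M * (1 / 2) ^ n := by gcongr; exact hM n x hx

lemma summable_norm (hq : IsEntireFamily q) (x : X) (z : ℂ) :
    Summable fun n => ‖(q n x : ℂ) * z ^ n‖ := by
  obtain ⟨u, hu, hle⟩ := hq.exists_summable_bound (isCompact_singleton (x := x))
    (show 0 < ‖z‖ + 1 by positivity)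
  exact hu.of_nonneg_of_le (fun _ => norm_nonneg _) fun n => hle n x rfl z (by linarith)

protected lemma derivCoeff (hq : IsEntireFamily q) : IsEntireFamily (derivCoeff q) where
  continuous_coeff n := continuous_const.mul (hq.continuous_coeff (n + 1))
  exists_bound {K} hK {R} hR := by
    obtain ⟨M, hM⟩ := hq.exists_bound hK (show 0 < 2 * R by positivity)
    refine ⟨M / R, fun n x hx => (le_div_iff₀ hR).2 ?_⟩
    have hn : (n : ℝ) + 1 ≤ 2 ^ (n + 1) := mod_cast (Nat.lt_two_pow_self (n := n + 1)).le
    rw [derivCoeff, abs_mul, abs_of_nonneg (show (0 : ℝ) ≤ n + 1 by positivity)]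
    calc (n + 1) * |q (n + 1) x| * R ^ n * R = (n + 1) * (|q (n + 1) x| * R ^ (n + 1)) := by ring
      _ ≤ 2 ^ (n + 1) * (|q (n + 1) x| * R ^ (n + 1)) := by gcongr
      _ = |q (n + 1) x| * (2 * R) ^ (n + 1) := by ring
      _ ≤ M := hM (n + 1) x hx

lemma hasDerivAt_powerSum (hq : IsEntireFamily q) (x : X) (z : ℂ) :
    HasDerivAt (powerSum q x) (powerSum (derivCoeff q) x z) z := by
  obtain ⟨u, hu, hle⟩ := hq.exists_summable_bound (isCompact_singleton (x := x))
    (show 0 < ‖z‖ + 1 by positivity)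
  have hz : z ∈ Metric.ball (0 : ℂ) (‖z‖ + 1) := by simp
  have hterm : ∀ n, DifferentiableOn ℂ (fun z : ℂ => (q n x : ℂ) * z ^ n)
      (Metric.ball 0 (‖z‖ + 1)) := fun n => by fun_prop
  have hbound : ∀ n, ∀ z' ∈ Metric.ball (0 : ℂ) (‖z‖ + 1), ‖(q n x : ℂ) * z' ^ n‖ ≤ u n :=
    fun n z' hz' => hle n x rfl z' (mem_ball_zero_iff.1 hz').le
  have hderiv := hasSum_deriv_of_summable_norm hu hterm Metric.isOpen_ball hbound hz
  have hsum : powerSum (derivCoeff q) x z = deriv (powerSum q x) z := by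
    refine Eq.trans ?_ hderiv.tsum_eq
    rw [hderiv.summable.tsum_eq_zero_add]
    simp only [powerSum, derivCoeff, pow_zero, mul_one, deriv_const', zero_add]
    refine tsum_congr fun n => ?_
    simp
    ring
  rw [hsum]
  exact ((differentiableOn_tsum_of_summable_norm hu hterm Metric.isOpen_ball
    hbound).differentiableAt (Metric.isOpen_ball.mem_nhds hz)).hasDerivAt

lemma continuous_powerSum [WeaklyLocallyCompactSpace X] (hq : IsEntireFamily q) :
    Continuous fun p : X × ℂ => powerSum q p.1 p.2 := by
  rw [continuous_iff_continuousAt]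
  rintro ⟨x, z⟩
  obtain ⟨K, hK, hxK⟩ := exists_compact_mem_nhds x
  obtain ⟨u, hu, hle⟩ := hq.exists_summable_bound hK (show 0 < ‖z‖ + 1 by positivity)
  have hcont : ContinuousOn (fun p : X × ℂ => powerSum q p.1 p.2)
      (K ×ˢ Metric.closedBall 0 (‖z‖ + 1)) := by
    refine continuousOn_tsum (fun n => ?_) hu
      fun n p hp => hle n p.1 hp.1 p.2 (mem_closedBall_zero_iff.1 hp.2)
    have := hq.continuous_coeff n
    fun_prop
  exact hcont.continuousAt
    (prod_mem_nhds hxK (Metric.closedBall_mem_nhds_of_mem (by simp)))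

protected lemma solutionCoeff (hv : IsEntireFamily v) : IsEntireFamily (solutionCoeff v) where
  continuous_coeff := continuous_solutionCoeff hv.continuous_coeff
  exists_bound {K} hK {R} hR := by
    obtain ⟨M, hM⟩ := hv.exists_bound hK hR
    obtain ⟨N, hN⟩ := exists_nat_ge (R ^ 2 * M)
    obtain ⟨B, hB0, hB⟩ :=
      exists_bound_of_lt (continuous_solutionCoeff hv.continuous_coeff) hK hR.le (N + 2)
    refine ⟨B, fun n x hx => ?_⟩
    have hM0 : 0 ≤ M := (show 0 ≤ |v 0 x| * R ^ 0 by positivity).trans (hM 0 x hx)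
    induction n using Nat.strong_induction_on with
    | _ n ih =>
      by_cases hn : n < N + 2
      · exact hB n hn x hx
      · obtain ⟨m, rfl⟩ : ∃ m, n = m + 2 := ⟨n - 2, by omega⟩
        have hstep := mul_abs_solutionCoeff_le hR.le hM0 m (fun k => hM k x hx)
          fun k hk => ih k (by omega)
        have hNm : (N : ℝ) ≤ m := mod_cast (by omega : N ≤ m)
        refine le_of_mul_le_mul_left (hstep.trans ?_) (show (0 : ℝ) < m + 2 by positivity)
        gcongr
        linarith

lemma powerSum_derivCoeff_derivCoeff_solutionCoeff (hv : IsEntireFamily v) (x : X) (z : ℂ) :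
    powerSum (derivCoeff (derivCoeff (solutionCoeff v))) x z =
      powerSum v x z * powerSum (solutionCoeff v) x z := by
  rw [powerSum, powerSum, powerSum, tsum_mul_tsum_eq_tsum_sum_range_of_summable_norm
    (hv.summable_norm x z) (hv.solutionCoeff.summable_norm x z)]
  refine tsum_congr fun n => ?_
  rw [derivCoeff_derivCoeff_solutionCoeff, ofReal_sum, Finset.sum_mul]
  refine Finset.sum_congr rfl fun k hk => ?_
  rw [← pow_mul_pow_sub z (Finset.mem_range_succ_iff.1 hk)]
  push_cast
  ring

end IsEntireFamily

end PowerSeries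

section LinearEquation

variable {𝕜 : Type*} [NormedRing 𝕜]

lemma lipschitzWith_snd_mul_fst {v : 𝕜} {K : NNReal} (hv : ‖v‖ ≤ K) :
    LipschitzWith (max 1 K) fun x : 𝕜 × 𝕜 => (x.2, v * x.1) := by
  refine LipschitzWith.prod_snd.prodMk (LipschitzWith.of_dist_le_mul fun x x' => ?_)
  rw [dist_eq_norm, dist_eq_norm, ← mul_sub]
  exact (norm_mul_le _ _).trans (mul_le_mul hv (norm_fst_le (x - x')) (norm_nonneg _) K.2)

lemma eq_zero_of_hasDerivAt_of_hasDerivAt_mul [NormedSpace ℝ 𝕜] {y p V : ℝ → 𝕜}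
    (hy : ∀ t, HasDerivAt y (p t) t) (hp : ∀ t, HasDerivAt p (V t * y t) t) (hV : Continuous V)
    {t₀ : ℝ} (hy₀ : y t₀ = 0) (hp₀ : p t₀ = 0) (t : ℝ) : y t = 0 := by
  set R : ℝ := |t| + |t₀| + 1
  obtain ⟨C, hC⟩ := (isCompact_Icc (a := -R) (b := R)).exists_bound_of_continuousOn hV.continuousOn
  have ht₀ : t₀ ∈ Ioo (-R) R := abs_lt.1 (by linarith [abs_nonneg t])
  have ht : t ∈ Icc (-R) R := abs_le.1 (by linarith [abs_nonneg t₀])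
  have huniq : EqOn (fun s => (y s, p s)) (fun _ => 0) (Icc (-R) R) :=
    ODE_solution_unique_of_mem_Icc (v := fun s x => (x.2, V s * x.1)) (s := fun _ => univ)
      (K := max 1 C.toNNReal)
      (fun s hs => (lipschitzWith_snd_mul_fst
        ((hC s (Ioo_subset_Icc_self hs)).trans (Real.le_coe_toNNReal C))).lipschitzOnWith)
      ht₀ (fun s _ => ((hy s).prodMk (hp s)).continuousAt.continuousWithinAt)
      (fun s _ => (hy s).prodMk (hp s)) (fun _ _ => mem_univ _) continuousOn_const
      (fun s _ => (hasDerivAt_const s (0 : 𝕜 × 𝕜)).congr_deriv (by ext <;> simp))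
      (fun _ _ => mem_univ _) (by simp [hy₀, hp₀])
  simpa using congrArg Prod.fst (huniq ht)

end LinearEquation

section Prufer

/-- `θ` solves the Prüfer equation of `y'' = V y`, the equation satisfied by the angle `θ` of
polar coordinates `y = r sin θ`, `y' = r cos θ` along a nonzero solution. -/
def IsPruferAngle (V θ : ℝ → ℝ) : Prop :=
  ∀ t, HasDerivAt θ (Real.cos (θ t) ^ 2 - V t * Real.sin (θ t) ^ 2) t

namespace IsPruferAngle

variable {V θ : ℝ → ℝ}

lemma continuous (hθ : IsPruferAngle V θ) : Continuous θ :=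
  continuous_iff_continuousAt.2 fun t => (hθ t).continuousAt

lemma int_mul_pi_le (hθ : IsPruferAngle V θ) {k : ℤ} {s t : ℝ} (hst : s ≤ t)
    (hs : k * Real.pi ≤ θ s) : k * Real.pi ≤ θ t := by
  refine image_le_of_deriv_right_lt_deriv_boundary (f := fun _ => k * Real.pi) (f' := fun _ => 0)
    continuousOn_const (fun x _ => hasDerivWithinAt_const _ _ _) hs hθ (fun x _ hx => ?_)
    ⟨hst, le_rfl⟩
  have hcos : 0 < Real.cos (k * Real.pi) ^ 2 := by
    rw [Real.cos_sq', Real.sin_int_mul_pi]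
    norm_num
  simpa [← hx, Real.sin_int_mul_pi] using hcos

lemma le_int_mul_pi_add_pi_div_two (hθ : IsPruferAngle V θ) {k : ℤ} {s t : ℝ} (hst : s ≤ t)
    (hV : ∀ x, s ≤ x → 0 < V x) (hs : θ s ≤ k * Real.pi + Real.pi / 2) :
    θ t ≤ k * Real.pi + Real.pi / 2 := by
  refine image_le_of_deriv_right_lt_deriv_boundary (B := fun _ => k * Real.pi + Real.pi / 2)
    (B' := fun _ => 0) hθ.continuous.continuousOn (fun x _ => (hθ x).hasDerivWithinAt) hs
    (fun x => hasDerivAt_const _ _) (fun x hx hx' => ?_) ⟨hst, le_rfl⟩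
  have hcos : Real.cos (k * Real.pi + Real.pi / 2) = 0 := by
    rw [Real.cos_add_pi_div_two, Real.sin_int_mul_pi, neg_zero]
  rw [hx', Real.sin_sq, hcos]
  linarith [hV x hx.1]

lemma add_sub_le (hθ : IsPruferAngle V θ) {s t : ℝ} (hst : s ≤ t)
    (hV : ∀ x ∈ Ico s t, V x ≤ -1) : θ s + (t - s) ≤ θ t := by
  refine image_le_of_deriv_right_le_deriv_boundary (f := fun x => θ s + (x - s))
    (f' := fun _ => 1) (by fun_prop)
    (fun x _ => (((hasDerivAt_id x).sub_const s).const_add (θ s)).hasDerivWithinAt) (by simp)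
    hθ.continuous.continuousOn (fun x _ => (hθ x).hasDerivWithinAt) (fun x hx => ?_) ⟨hst, le_rfl⟩
  nlinarith [hV x hx, Real.sin_sq_add_cos_sq (θ x), sq_nonneg (Real.sin (θ x))]

lemma tendsto_atTop (hθ : IsPruferAngle V θ) (hV : ∀ᶠ t in atTop, V t ≤ -1) :
    Tendsto θ atTop atTop := by
  obtain ⟨T, hT⟩ := eventually_atTop.1 hV
  refine tendsto_atTop_mono' _ (f₁ := fun t => θ T + (t - T)) ?_
    (tendsto_atTop_add_const_left _ _ (tendsto_atTop_add_const_right _ _ tendsto_id))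
  filter_upwards [eventually_ge_atTop T] with t ht
  exact hθ.add_sub_le ht fun x hx => hT x hx.1

lemma infinite_setOf_sin_eq_zero (hθ : IsPruferAngle V θ) (hV : ∀ᶠ t in atTop, V t ≤ -1) :
    {t | Real.sin (θ t) = 0}.Infinite := by
  refine infinite_of_forall_exists_gt fun s => ?_
  obtain ⟨n, hn⟩ := exists_nat_ge (θ (s + 1) / Real.pi)
  obtain ⟨t, ht, htn⟩ := intermediate_value_Ici hθ.continuous.continuousOn (hθ.tendsto_atTop hV)
    (show n * Real.pi ∈ Ici (θ (s + 1)) from (div_le_iff₀ Real.pi_pos).1 hn)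
  exact ⟨t, by rw [mem_ofPred_eq, htn, Real.sin_nat_mul_pi], (lt_add_one s).trans_le ht⟩

lemma hasDerivAt_sin_two_mul (hθ : IsPruferAngle V θ) (t : ℝ) :
    HasDerivAt (fun t => Real.sin (2 * θ t)) (Real.cos (2 * θ t) *
      (2 * (Real.cos (θ t) ^ 2 - V t * Real.sin (θ t) ^ 2))) t :=
  ((hθ t).const_mul 2).sin

/-- While `V > 0`, the function `sin (2 θ)` can only cross zero upwards. -/
lemma exists_sin_two_mul_pos (hθ : IsPruferAngle V θ) {t : ℝ} (hV : 0 < V t)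
    (ht : 0 ≤ Real.sin (2 * θ t)) : ∃ s ≥ t, 0 < Real.sin (2 * θ s) := by
  rcases ht.lt_or_eq with hpos | hzero
  · exact ⟨t, le_rfl, hpos⟩
  have hderiv : 0 < deriv (fun t => Real.sin (2 * θ t)) t := by
    rw [(hθ.hasDerivAt_sin_two_mul t).deriv, Real.cos_two_mul']
    have hsc : Real.sin (θ t) * Real.cos (θ t) = 0 := by
      rw [Real.sin_two_mul] at hzero
      linarith
    have hone := Real.sin_sq_add_cos_sq (θ t)
    rcases mul_eq_zero.1 hsc with h | h <;> rw [h] at hone ⊢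
    · rw [show Real.cos (θ t) ^ 2 = 1 by linarith]
      norm_num
    · rw [show Real.sin (θ t) ^ 2 = 1 by linarith]
      linarith
  have hsign := eventually_nhdsWithin_sign_eq_of_deriv_pos hderiv hzero.symm
  obtain ⟨s, hs, hts⟩ := ((hsign.filter_mono nhdsWithin_le_nhds).and
    (self_mem_nhdsWithin (s := Ioi t))).exists
  rw [sign_pos (sub_pos.2 hts), sign_eq_one_iff] at hs
  exact ⟨s, (mem_Ioi.1 hts).le, hs⟩

end IsPruferAngle

lemma exists_int_mul_pi_lt_of_sin_two_mul_pos {φ : ℝ} (hφ : 0 < Real.sin (2 * φ)) :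
    ∃ k : ℤ, k * Real.pi < φ ∧ φ < k * Real.pi + Real.pi / 2 := by
  set k := toIcoDiv Real.pi_pos 0 φ
  obtain ⟨hψ₀, hψπ⟩ := toIcoMod_mem_Ico Real.pi_pos 0 φ
  set ψ := toIcoMod Real.pi_pos 0 φ
  have hφψ : φ = ψ + k * Real.pi := by
    rw [← zsmul_eq_mul]
    exact (toIcoMod_add_toIcoDiv_zsmul Real.pi_pos 0 φ).symm
  have hsin : 0 < Real.sin (2 * ψ) := by
    rwa [hφψ, mul_add, mul_left_comm, Real.sin_add_int_mul_two_pi] at hφ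
  have hψ₁ : 2 * ψ < Real.pi := by
    by_contra! h
    have := Real.sin_nonneg_of_nonneg_of_le_pi (sub_nonneg.2 h) (by linarith)
    rw [Real.sin_sub_pi] at this
    linarith
  have hψ₂ : 0 < ψ := hψ₀.lt_of_ne fun h => by simp [← h] at hsin
  exact ⟨k, by linarith, by linarith⟩

end Prufer

section Shooting

variable {U : ℝ → ℝ} {θ : ℝ → ℝ → ℝ}

/-- The parameters `c` for which `θ c` enters the quadrant `(kπ, kπ + π/2)` at a time after which
it cannot leave it, because `U - c` is bounded below by a positive constant from then on. -/
def trappedParameters (U : ℝ → ℝ) (θ : ℝ → ℝ → ℝ) (k : ℤ) : Set ℝ :=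
  {c | ∃ t, (∃ d > c, ∀ s ≥ t, d ≤ U s) ∧
    k * Real.pi < θ c t ∧ θ c t < k * Real.pi + Real.pi / 2}

lemma isOpen_trappedParameters (hcont : ∀ t, Continuous fun c => θ c t) (k : ℤ) :
    IsOpen (trappedParameters U θ k) := by
  have hunion : trappedParameters U θ k = ⋃ (t : ℝ) (d : ℝ) (_ : ∀ s ≥ t, d ≤ U s),
      Iio d ∩ (θ · t) ⁻¹' Ioo (k * Real.pi) (k * Real.pi + Real.pi / 2) := by
    ext c
    simp [trappedParameters]
    grind
  rw [hunion]
  exact isOpen_iUnion fun t => isOpen_iUnion fun d => isOpen_iUnion fun _ =>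
    isOpen_Iio.inter (isOpen_Ioo.preimage (hcont t))

lemma eventually_mem_Icc_of_mem_trappedParameters {k : ℤ} {c : ℝ}
    (hθ : IsPruferAngle (fun t => U t - c) (θ c)) (hc : c ∈ trappedParameters U θ k) :
    ∀ᶠ t in atTop, θ c t ∈ Icc (k * Real.pi) (k * Real.pi + Real.pi / 2) := by
  obtain ⟨s, ⟨d, hd, hdU⟩, hlow, hup⟩ := hc
  filter_upwards [eventually_ge_atTop s] with t hst
  exact ⟨hθ.int_mul_pi_le hst hlow.le,
    hθ.le_int_mul_pi_add_pi_div_two hst (fun x hx => by linarith [hdU x hx]) hup.le⟩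

lemma eq_of_mem_trappedParameters {k l : ℤ} {c : ℝ}
    (hθ : IsPruferAngle (fun t => U t - c) (θ c)) (hk : c ∈ trappedParameters U θ k)
    (hl : c ∈ trappedParameters U θ l) : k = l := by
  obtain ⟨t, htk, htl⟩ := ((eventually_mem_Icc_of_mem_trappedParameters hθ hk).and
    (eventually_mem_Icc_of_mem_trappedParameters hθ hl)).exists
  have hkl : (k : ℝ) < l + 1 := by nlinarith [htk.1, htl.2, Real.pi_pos]
  have hlk : (l : ℝ) < k + 1 := by nlinarith [htl.1, htk.2, Real.pi_pos]
  norm_cast at hkl hlk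
  omega

lemma exists_mem_trappedParameters (hU : Tendsto U atTop atTop) {c : ℝ}
    (hθ : IsPruferAngle (fun t => U t - c) (θ c))
    (hfreq : ∃ᶠ t in atTop, 0 ≤ Real.sin (2 * θ c t)) : ∃ k, c ∈ trappedParameters U θ k := by
  obtain ⟨T, hT⟩ := eventually_atTop.1 (hU.eventually_ge_atTop (c + 1))
  obtain ⟨t, htT, ht⟩ := frequently_atTop.1 hfreq T
  obtain ⟨s, hst, hs⟩ := hθ.exists_sin_two_mul_pos (by linarith [hT t htT]) ht
  obtain ⟨k, hk⟩ := exists_int_mul_pi_lt_of_sin_two_mul_pos hs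
  exact ⟨k, s, ⟨c + 1, lt_add_one c, fun x hx => hT x (le_trans htT (le_trans hst hx))⟩, hk⟩

lemma exists_gt_eventually_int_mul_pi_le (hU : Continuous U)
    (hθ : ∀ c, IsPruferAngle (fun t => U t - c) (θ c)) (hθ₀ : ∀ c, 0 ≤ θ c 0) (k : ℤ) (c₀ : ℝ) :
    ∃ c > c₀, ∀ᶠ t in atTop, k * Real.pi ≤ θ c t := by
  set L : ℝ := |(k : ℝ)| * Real.pi
  have hL : 0 ≤ L := by positivity
  obtain ⟨M, hM⟩ := (isCompact_Icc (a := 0) (b := L)).bddAbove_image hU.continuousOn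
  refine ⟨max c₀ M + 1, (le_max_left _ _).trans_lt (lt_add_one _), ?_⟩
  filter_upwards [eventually_ge_atTop L] with t ht
  refine (hθ _).int_mul_pi_le ht ?_
  have hrot := (hθ (max c₀ M + 1)).add_sub_le hL fun x hx => by
    linarith [hM (mem_image_of_mem U (Ico_subset_Icc_self hx)), le_max_right c₀ M]
  have hkL : k * Real.pi ≤ L := mul_le_mul_of_nonneg_right (le_abs_self _) Real.pi_pos.le
  linarith [hθ₀ (max c₀ M + 1)]

/-- If some `c₀` bounded the good parameters, the whole connected half-line above it would be
trapped in a single quadrant, although the angle makes more and more turns as `c` grows. -/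
theorem exists_gt_eventually_sin_two_mul_neg (hU : Continuous U) (hU' : Tendsto U atTop atTop)
    (hθ : ∀ c, IsPruferAngle (fun t => U t - c) (θ c)) (hθ₀ : ∀ c, 0 ≤ θ c 0)
    (hcont : ∀ t, Continuous fun c => θ c t) (c₀ : ℝ) :
    ∃ c > c₀, ∀ᶠ t in atTop, Real.sin (2 * θ c t) < 0 := by
  by_contra! hno
  choose k hk using fun c : Ioi c₀ =>
    exists_mem_trappedParameters hU' (hθ c) (by simpa using hno c c.2)
  have hloc : IsLocallyConstant k := (IsLocallyConstant.iff_exists_open k).2 fun c =>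
    ⟨Subtype.val ⁻¹' trappedParameters U θ (k c),
      (isOpen_trappedParameters hcont _).preimage continuous_subtype_val, hk c,
      fun c' hc' => eq_of_mem_trappedParameters (hθ c') (hk c') hc'⟩
  have : PreconnectedSpace (Ioi c₀) := Subtype.preconnectedSpace isPreconnected_Ioi
  set k₀ := k ⟨c₀ + 1, lt_add_one c₀⟩
  obtain ⟨c, hc, hturn⟩ := exists_gt_eventually_int_mul_pi_le hU hθ hθ₀ (k₀ + 1) c₀
  have hck₀ : k ⟨c, hc⟩ = k₀ := hloc.apply_eq_of_preconnectedSpace _ _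
  obtain ⟨t, ht, ht'⟩ :=
    (hturn.and (eventually_mem_Icc_of_mem_trappedParameters (hθ c) (hk ⟨c, hc⟩))).exists
  rw [hck₀] at ht'
  push_cast at ht
  linarith [ht'.2, Real.pi_pos]

end Shooting

section PruferAngle

/-- The Prüfer angle, starting at `π / 2`, of a solution of `y' = p`, `p' = V y` with `p 0 = 0`.
The integrand is the derivative of the polar angle of `(p, y)`, so no branch has to be chosen. -/
noncomputable def pruferAngle (y p V : ℝ → ℝ) (t : ℝ) : ℝ :=
  Real.pi / 2 + ∫ s in 0..t, (p s ^ 2 - V s * y s ^ 2) / (y s ^ 2 + p s ^ 2)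

variable {y p V : ℝ → ℝ}

lemma sq_add_sq_pos_of_hasDerivAt (hy : ∀ t, HasDerivAt y (p t) t)
    (hp : ∀ t, HasDerivAt p (V t * y t) t) (hV : Continuous V) (hy₀ : y 0 ≠ 0) (t : ℝ) :
    0 < y t ^ 2 + p t ^ 2 := by
  refine lt_of_le_of_ne (by positivity) fun h => hy₀ ?_
  obtain ⟨hyt, hpt⟩ := (add_eq_zero_iff_of_nonneg (sq_nonneg _) (sq_nonneg _)).1 h.symm
  exact eq_zero_of_hasDerivAt_of_hasDerivAt_mul hy hp hV (pow_eq_zero_iff two_ne_zero |>.1 hyt)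
    (pow_eq_zero_iff two_ne_zero |>.1 hpt) 0

lemma continuous_pruferAngle {X : Type*} [TopologicalSpace X] {y p V : X → ℝ → ℝ}
    (hy : Continuous y.uncurry) (hp : Continuous p.uncurry) (hV : Continuous V.uncurry)
    (hpos : ∀ x t, 0 < y x t ^ 2 + p x t ^ 2) (t : ℝ) :
    Continuous fun x => pruferAngle (y x) (p x) (V x) t := by
  refine continuous_const.add
    (intervalIntegral.continuous_parametric_intervalIntegral_of_continuous ?_ continuous_const)
  exact ((hp.pow 2).sub (hV.mul (hy.pow 2))).div ((hy.pow 2).add (hp.pow 2))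
    fun x => (hpos x.1 x.2).ne'

lemma hasDerivAt_pruferAngle (hy : Continuous y) (hp : Continuous p) (hV : Continuous V)
    (hpos : ∀ t, 0 < y t ^ 2 + p t ^ 2) (t : ℝ) :
    HasDerivAt (pruferAngle y p V) ((p t ^ 2 - V t * y t ^ 2) / (y t ^ 2 + p t ^ 2)) t := by
  have hcont : Continuous fun s => (p s ^ 2 - V s * y s ^ 2) / (y s ^ 2 + p s ^ 2) :=
    Continuous.div (by fun_prop) (by fun_prop) fun s => (hpos s).ne'
  exact (hcont.integral_hasStrictDerivAt 0 t).hasDerivAt.const_add _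

variable (hy : ∀ t, HasDerivAt y (p t) t) (hp : ∀ t, HasDerivAt p (V t * y t) t)
  (hV : Continuous V) (hy₀ : y 0 ≠ 0) (hp₀ : p 0 = 0)
include hy hp hV hy₀

lemma hasDerivAt_pruferAngle_of_hasDerivAt (t : ℝ) :
    HasDerivAt (pruferAngle y p V) ((p t ^ 2 - V t * y t ^ 2) / (y t ^ 2 + p t ^ 2)) t :=
  hasDerivAt_pruferAngle (continuous_iff_continuousAt.2 fun t => (hy t).continuousAt)
    (continuous_iff_continuousAt.2 fun t => (hp t).continuousAt) hV
    (sq_add_sq_pos_of_hasDerivAt hy hp hV hy₀) t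

include hp₀

lemma mul_cos_pruferAngle (t : ℝ) :
    y t * Real.cos (pruferAngle y p V t) = p t * Real.sin (pruferAngle y p V t) := by
  set θ := pruferAngle y p V
  have hpos := sq_add_sq_pos_of_hasDerivAt hy hp hV hy₀
  set G : ℝ → ℝ := fun t => y t * Real.cos (θ t) - p t * Real.sin (θ t)
  have hderiv : ∀ t, HasDerivAt (fun t => G t ^ 2 / (y t ^ 2 + p t ^ 2)) 0 t := fun t => by
    have hθ := hasDerivAt_pruferAngle_of_hasDerivAt hy hp hV hy₀ t
    refine ((((hy t).mul hθ.cos).sub ((hp t).mul hθ.sin)).pow 2 |>.div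
      (((hy t).pow 2).add ((hp t).pow 2)) (hpos t).ne').congr_deriv ?_
    have hne := (hpos t).ne'
    simp only [Pi.add_apply, Pi.sub_apply, Pi.mul_apply, Pi.pow_apply]
    rw [div_eq_zero_iff]
    left
    field_simp
    ring
  have hconst := is_const_of_deriv_eq_zero (fun t => (hderiv t).differentiableAt)
    (fun t => (hderiv t).deriv) t 0
  have hG₀ : G 0 = 0 := by simp [G, θ, pruferAngle, hp₀]
  rw [hG₀, zero_pow two_ne_zero, zero_div, div_eq_zero_iff, or_iff_left (hpos t).ne'] at hconst
  exact sub_eq_zero.1 (pow_eq_zero_iff two_ne_zero |>.1 hconst)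

lemma exists_polar_pruferAngle (t : ℝ) : ∃ r ≠ 0,
    y t = r * Real.sin (pruferAngle y p V t) ∧ p t = r * Real.cos (pruferAngle y p V t) := by
  have hcross := mul_cos_pruferAngle hy hp hV hy₀ hp₀ t
  have hone := Real.sin_sq_add_cos_sq (pruferAngle y p V t)
  set θ := pruferAngle y p V t
  have hyr : y t = (y t * Real.sin θ + p t * Real.cos θ) * Real.sin θ := by
    linear_combination -(y t) * hone + Real.cos θ * hcross
  have hpr : p t = (y t * Real.sin θ + p t * Real.cos θ) * Real.cos θ := by
    linear_combination -(p t) * hone - Real.sin θ * hcross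
  refine ⟨_, fun hr => ?_, hyr, hpr⟩
  have hpos := sq_add_sq_pos_of_hasDerivAt hy hp hV hy₀ t
  rw [hr, zero_mul] at hyr hpr
  exact hpos.ne' (by rw [hyr, hpr]; norm_num)

lemma isPruferAngle_pruferAngle : IsPruferAngle V (pruferAngle y p V) := fun t => by
  refine (hasDerivAt_pruferAngle_of_hasDerivAt hy hp hV hy₀ t).congr_deriv ?_
  obtain ⟨r, hr, hyr, hpr⟩ := exists_polar_pruferAngle hy hp hV hy₀ hp₀ t
  have hone := Real.sin_sq_add_cos_sq (pruferAngle y p V t)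
  have hnorm : y t ^ 2 + p t ^ 2 = r ^ 2 := by
    rw [hyr, hpr]
    linear_combination r ^ 2 * hone
  rw [hnorm, hyr, hpr]
  field_simp

theorem infinite_setOf_eq_zero_of_hasDerivAt (hV' : ∀ᶠ t in atTop, V t ≤ -1) :
    {t | y t = 0}.Infinite := by
  refine ((isPruferAngle_pruferAngle hy hp hV hy₀ hp₀).infinite_setOf_sin_eq_zero hV').mono
    fun t ht => ?_
  obtain ⟨r, -, hyr, -⟩ := exists_polar_pruferAngle hy hp hV hy₀ hp₀ t
  rw [mem_ofPred_eq, hyr, ht, mul_zero]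

end PruferAngle

theorem exists_gt_eventually_mul_neg {U : ℝ → ℝ} {y p : ℝ → ℝ → ℝ} (hU : Continuous U)
    (hU' : Tendsto U atTop atTop) (hy : ∀ c t, HasDerivAt (y c) (p c t) t)
    (hp : ∀ c t, HasDerivAt (p c) ((U t - c) * y c t) t) (hyc : Continuous y.uncurry)
    (hpc : Continuous p.uncurry) (hy₀ : ∀ c, y c 0 ≠ 0) (hp₀ : ∀ c, p c 0 = 0) (c₀ : ℝ) :
    ∃ c > c₀, ∀ᶠ t in atTop, y c t * p c t < 0 := by
  have hV : ∀ c, Continuous fun t => U t - c := fun c => by fun_prop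
  obtain ⟨c, hc, hneg⟩ := exists_gt_eventually_sin_two_mul_neg hU hU'
    (θ := fun c => pruferAngle (y c) (p c) fun t => U t - c)
    (fun c => isPruferAngle_pruferAngle (hy c) (hp c) (hV c) (hy₀ c) (hp₀ c))
    (fun c => by simpa [pruferAngle] using Real.pi_div_two_pos.le)
    (continuous_pruferAngle hyc hpc (by fun_prop) fun c =>
      sq_add_sq_pos_of_hasDerivAt (hy c) (hp c) (hV c) (hy₀ c)) c₀
  refine ⟨c, hc, hneg.mono fun t ht => ?_⟩
  obtain ⟨r, hr, hyr, hpr⟩ := exists_polar_pruferAngle (hy c) (hp c) (hV c) (hy₀ c) (hp₀ c) t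
  rw [Real.sin_two_mul] at ht
  rw [hyr, hpr]
  nlinarith [mul_neg_of_pos_of_neg (sq_pos_of_ne_zero hr) ht]

section EntireFunction

lemma hasDerivAt_re {f : ℝ → ℂ} {f' : ℂ} {t : ℝ} (hf : HasDerivAt f f' t) :
    HasDerivAt (fun t => (f t).re) f'.re t :=
  reCLM.hasFDerivAt.comp_hasDerivAt t hf

lemma hasDerivAt_im {f : ℝ → ℂ} {f' : ℂ} {t : ℝ} (hf : HasDerivAt f f' t) :
    HasDerivAt (fun t => (f t).im) f'.im t :=
  imCLM.hasFDerivAt.comp_hasDerivAt t hf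

lemma hasDerivAt_add_ofReal_mul (z u : ℂ) (s : ℝ) :
    HasDerivAt (fun s : ℝ => z + s * u) u s := by
  simpa using ((hasDerivAt_id s).ofReal_comp.mul_const u).const_add z

lemma finite_setOf_eq_zero_of_norm_le {w : ℂ → ℂ} (hw : Differentiable ℂ w) (hw₀ : w ≠ 0)
    (R : ℝ) : {z | w z = 0 ∧ ‖z‖ ≤ R}.Finite := by
  obtain ⟨z₀, hz₀⟩ := Function.ne_iff.1 hw₀
  have hcodisc : w ⁻¹' {0}ᶜ ∈ codiscreteWithin (Metric.closedBall 0 R) :=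
    codiscreteWithin_mono (subset_univ _)
      ((analyticOnNhd_univ_iff_differentiable.2 hw).preimage_zero_mem_codiscrete hz₀)
  refine ((isCompact_closedBall 0 R).finite_sdiff_of_mem_codiscreteWithin hcodisc).subset
    fun z hz => ⟨mem_closedBall_zero_iff.2 hz.2, by simpa using hz.1⟩

end EntireFunction

section EntireSolution

/-- `w` is an entire solution of `w'' + Q w = 0`. -/
structure IsEntireSolution (Q w : ℂ → ℂ) : Prop where
  differentiable : Differentiable ℂ w
  ode (z : ℂ) : iteratedDeriv 2 w z + Q z * w z = 0

variable {Q w : ℂ → ℂ}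

lemma isEntireSolution_of_hasDerivAt {w' : ℂ → ℂ} (hw : ∀ z, HasDerivAt w (w' z) z)
    (hw' : ∀ z, HasDerivAt w' (-(Q z * w z)) z) : IsEntireSolution Q w where
  differentiable z := (hw z).differentiableAt
  ode z := by
    rw [iteratedDeriv_succ, iteratedDeriv_one, funext fun z => (hw z).deriv, (hw' z).deriv,
      neg_add_cancel]

namespace IsEntireSolution

lemma hasDerivAt_deriv (hw : IsEntireSolution Q w) (z : ℂ) :
    HasDerivAt (deriv w) (-(Q z * w z)) z := by
  rw [← eq_neg_of_add_eq_zero_left (hw.ode z), iteratedDeriv_succ, iteratedDeriv_one]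
  exact (hw.differentiable.deriv z).hasDerivAt

lemma hasDerivAt_comp_line (hw : IsEntireSolution Q w) (z u : ℂ) (s : ℝ) :
    HasDerivAt (fun s : ℝ => w (z + s * u)) (u * deriv w (z + s * u)) s := by
  rw [mul_comm]
  exact (hw.differentiable _).hasDerivAt.comp s (hasDerivAt_add_ofReal_mul z u s)

lemma hasDerivAt_deriv_comp_line (hw : IsEntireSolution Q w) (z u : ℂ) (s : ℝ) :
    HasDerivAt (fun s : ℝ => deriv w (z + s * u)) (-(u * Q (z + s * u) * w (z + s * u))) s :=
  ((hw.hasDerivAt_deriv _).comp s (hasDerivAt_add_ofReal_mul z u s)).congr_deriv (by ring)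

lemma deriv_ne_zero_of_eq_zero (hw : IsEntireSolution Q w) (hQ : Continuous Q) (hw₀ : w ≠ 0)
    {z : ℂ} (hz : w z = 0) : deriv w z ≠ 0 := by
  refine fun hz' => hw₀ (funext fun x => ?_)
  have hray := eq_zero_of_hasDerivAt_of_hasDerivAt_mul (t₀ := 0) (t := 1)
    (hw.hasDerivAt_comp_line z (x - z))
    (V := fun s => -((x - z) ^ 2 * Q (z + s * (x - z))))
    (fun s => ((hw.hasDerivAt_deriv_comp_line z (x - z) s).const_mul (x - z)).congr_deriv
      (by ring))
    (by fun_prop) (by simpa using hz) (by simp [hz'])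
  simpa using hray

lemma deriv_im_eq_zero (hw : IsEntireSolution Q w) (hreal : ∀ x : ℝ, (w x).im = 0) (x : ℝ) :
    (deriv w x).im = 0 := by
  have him := hasDerivAt_im (hw.hasDerivAt_comp_line 0 1 x)
  simp only [mul_one, zero_add, one_mul, hreal] at him
  exact him.unique (hasDerivAt_const x 0)

lemma hasDerivAt_re_ray (hw : IsEntireSolution Q w) (u : ℂ) (s : ℝ) :
    HasDerivAt (fun s : ℝ => (w (s * u)).re) (u * deriv w (s * u)).re s := by
  simpa using hasDerivAt_re (hw.hasDerivAt_comp_line 0 u s)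

lemma hasDerivAt_re_deriv_ray (hw : IsEntireSolution Q w) {u : ℂ} {V s : ℝ}
    (hV : u ^ 2 * Q (s * u) = -(V : ℂ)) :
    HasDerivAt (fun s : ℝ => (u * deriv w (s * u)).re) (V * (w (s * u)).re) s := by
  have hre := hasDerivAt_re ((hw.hasDerivAt_deriv_comp_line 0 u s).const_mul u)
  simp only [zero_add] at hre
  refine hre.congr_deriv ?_
  rw [← re_ofReal_mul]
  congr 1
  linear_combination -(w (s * u)) * hV

lemma hasDerivAt_deriv_mul_conj (hw : IsEntireSolution Q w) (z u : ℂ) (s : ℝ) :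
    HasDerivAt (fun s : ℝ => deriv w (z + s * u) * conj (w (z + s * u)))
      (conj u * normSq (deriv w (z + s * u)) - u * Q (z + s * u) * normSq (w (z + s * u))) s := by
  refine ((hw.hasDerivAt_deriv_comp_line z u s).mul
    (hw.hasDerivAt_comp_line z u s).star).congr_deriv ?_
  rw [normSq_eq_conj_mul_self, normSq_eq_conj_mul_self]
  simp only [star_def, map_mul]
  ring

theorem ne_zero_of_im_nonpos (hw : IsEntireSolution Q w) {z : ℂ} {x : ℝ} (hx : 0 ≤ x)
    (hQ : ∀ s ∈ Icc 0 x, (Q (z + s)).im ≤ 0) (hz : 0 < (deriv w z * conj (w z)).im) :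
    w (z + x) ≠ 0 := by
  intro hzero
  have hderiv := fun s => hasDerivAt_im (hw.hasDerivAt_deriv_mul_conj z 1 s)
  simp only [mul_one, map_one, one_mul] at hderiv
  have hmono : MonotoneOn (fun s : ℝ => (deriv w (z + s) * conj (w (z + s))).im) (Icc 0 x) := by
    refine monotoneOn_of_deriv_nonneg (convex_Icc 0 x)
      (fun s _ => (hderiv s).continuousAt.continuousWithinAt)
      (fun s _ => (hderiv s).differentiableAt.differentiableWithinAt) fun s hs => ?_
    rw [(hderiv s).deriv, sub_im, ofReal_im, im_mul_ofReal, zero_sub]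
    exact neg_nonneg.2 (mul_nonpos_of_nonpos_of_nonneg (hQ s (interior_subset hs))
      (normSq_nonneg _))
  have hle := hmono (left_mem_Icc.2 hx) (right_mem_Icc.2 hx) hx
  simp only [ofReal_zero, add_zero, hzero, map_zero, mul_zero, zero_im] at hle
  exact hz.not_ge hle

end IsEntireSolution

lemma normSq_div_two_le_im_mul_sq {z : ℂ} (hy : 0 ≤ z.im) (hyx : z.im ≤ 6 / 5 * z.re) :
    normSq z / 2 ≤ ((1 + 2 * I) * z ^ 2).im := by
  have him : ((1 + 2 * I) * z ^ 2).im = 2 * (z.re ^ 2 + z.re * z.im - z.im ^ 2) := by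
    simp [pow_two]
    ring
  rw [him, normSq_apply]
  nlinarith [mul_nonneg hy (sub_nonneg.2 hyx), mul_nonneg (by linarith : 0 ≤ z.re)
    (sub_nonneg.2 hyx)]

lemma im_two_mul_conj_mul_le (z A B : ℂ) :
    (2 * conj z * conj (1 + 2 * I) * (B * conj A)).im
      ≤ normSq z / 4 * normSq B + 20 * normSq A := by
  have hu : ‖(1 + 2 * I : ℂ)‖ ^ 2 = 5 := by
    rw [Complex.sq_norm, normSq_apply]
    norm_num
  refine (im_le_norm _).trans ?_
  simp only [norm_mul, RCLike.norm_conj, RCLike.norm_ofNat, ← Complex.sq_norm]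
  nlinarith [sq_nonneg (‖z‖ * ‖B‖ / 2 - 2 * ‖(1 + 2 * I : ℂ)‖ * ‖A‖)]

/-- The derivative of `Im ((conj z)² w' conj w)` along a line of slope `2`, as a form in `A = w` and
`B = w'`. Its other terms dominate the first one by AM-GM, `20` being the resulting constant. -/
lemma im_sector_derivative_neg {z q A B : ℂ} (hz₀ : z ≠ 0) (hy : 0 ≤ z.im)
    (hyx : z.im ≤ 6 / 5 * z.re) (hq : 20 < (conj z ^ 2 * (1 + 2 * I) * q).im)
    (hAB : A = 0 → B ≠ 0) :
    (2 * conj z * conj (1 + 2 * I) * (B * conj A) + conj z ^ 2 *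
      (conj (1 + 2 * I) * normSq B - (1 + 2 * I) * q * normSq A)).im < 0 := by
  have hgrow := mul_le_mul_of_nonneg_right (normSq_div_two_le_im_mul_sq hy hyx) (normSq_nonneg B)
  have hsplit : (conj z ^ 2 *
      (conj (1 + 2 * I) * normSq B - (1 + 2 * I) * q * normSq A)).im =
      -(((1 + 2 * I) * z ^ 2).im * normSq B)
        - (conj z ^ 2 * (1 + 2 * I) * q).im * normSq A := by
    rw [← im_mul_ofReal _ (normSq A), ← neg_mul, ← conj_im, ← im_mul_ofReal, ← sub_im]
    congr 1
    simp only [map_mul, map_pow]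
    ring
  rw [add_im, hsplit]
  have hcross := im_two_mul_conj_mul_le z A B
  have hz : 0 < normSq z := normSq_pos.2 hz₀
  by_cases hA : A = 0
  · have hB : 0 < normSq B := normSq_pos.2 (hAB hA)
    simp only [hA, map_zero, mul_zero] at hcross ⊢
    nlinarith [mul_pos hz hB]
  · nlinarith [mul_lt_mul_of_pos_right hq (normSq_pos.2 hA), mul_nonneg hz.le (normSq_nonneg B)]

namespace IsEntireSolution

lemma hasDerivAt_conj_sq_mul_deriv_mul_conj (hw : IsEntireSolution Q w) (z u : ℂ) (s : ℝ) :
    HasDerivAt (fun s : ℝ => conj (z + s * u) ^ 2 * (deriv w (z + s * u) * conj (w (z + s * u))))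
      (2 * conj (z + s * u) * conj u * (deriv w (z + s * u) * conj (w (z + s * u))) +
        conj (z + s * u) ^ 2 * (conj u * normSq (deriv w (z + s * u)) -
          u * Q (z + s * u) * normSq (w (z + s * u)))) s := by
  refine (((hasDerivAt_add_ofReal_mul z u s).star.pow 2).mul
    (hw.hasDerivAt_deriv_mul_conj z u s)).congr_deriv ?_
  simp only [star_def]
  norm_num

theorem ne_zero_of_lt_im (hw : IsEntireSolution Q w) (hQ : Continuous Q) (hw₀ : w ≠ 0)
    (hreal : ∀ x : ℝ, (w x).im = 0) {x y : ℝ} (hy : 0 < y) (hyx : y ≤ 6 / 5 * x)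
    (hsector : ∀ z : ℂ, 0 ≤ z.im → z.im ≤ 6 / 5 * z.re → 2 / 5 * x ≤ z.re →
      20 < (conj z ^ 2 * (1 + 2 * I) * Q z).im) : w (x + y * I) ≠ 0 := by
  intro hzero
  set x₀ : ℝ := x - y / 2
  have hend : (x₀ : ℂ) + (y / 2 : ℝ) * (1 + 2 * I) = x + y * I := by
    simp only [x₀]
    push_cast
    ring
  have hderiv := fun s => hasDerivAt_im
    (hw.hasDerivAt_conj_sq_mul_deriv_mul_conj x₀ (1 + 2 * I) s)
  have hanti := strictAntiOn_of_deriv_neg (convex_Icc 0 (y / 2))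
    (fun s _ => (hderiv s).continuousAt.continuousWithinAt) fun s hs => ?_
  · have hlt := hanti (left_mem_Icc.2 (by positivity)) (right_mem_Icc.2 (by positivity))
      (show 0 < y / 2 by positivity)
    have hstart : (conj (x₀ : ℂ) ^ 2 * (deriv w x₀ * conj (w x₀))).im = 0 := by
      simp [pow_two, hreal, hw.deriv_im_eq_zero hreal]
    simp only [hend, hzero, ofReal_zero, zero_mul, add_zero, hstart, map_zero, mul_zero,
      zero_im, lt_irrefl] at hlt
  · rw [interior_Icc] at hs
    rw [(hderiv s).deriv]
    set z : ℂ := x₀ + s * (1 + 2 * I)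
    have hre : z.re = x - y / 2 + s := by simp [z, x₀]
    have him : z.im = 2 * s := by simp [z, mul_comm]
    have hxre : 2 / 5 * x ≤ z.re := by linarith [hs.1]
    have hz₀ : z ≠ 0 := fun h => by
      rw [h, zero_re] at hxre
      linarith
    have hz : 0 ≤ z.im := by linarith [hs.1]
    have hz' : z.im ≤ 6 / 5 * z.re := by linarith [hs.2]
    exact im_sector_derivative_neg hz₀ hz hz' (hsector z hz hz' hxre)
      (hw.deriv_ne_zero_of_eq_zero hQ hw₀)

end IsEntireSolution

end EntireSolution

section Quartic

/-- The coefficient `a z⁴ + b z² - c` of the equation. -/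
def quartic (a b c : ℝ) (z : ℂ) : ℂ := a * z ^ 4 + b * z ^ 2 - c

variable {a b c : ℝ}

lemma continuous_quartic (a b c : ℝ) : Continuous (quartic a b c) := by
  unfold quartic
  fun_prop

lemma quartic_im (a b c : ℝ) (z : ℂ) :
    (quartic a b c z).im = 2 * z.re * z.im * (2 * a * (z.re ^ 2 - z.im ^ 2) + b) := by
  simp [quartic, pow_succ]
  ring

lemma im_sector_quartic (a b c : ℝ) (z : ℂ) :
    (conj z ^ 2 * (1 + 2 * I) * quartic a b c z).im =
      a * normSq z ^ 2 * ((1 + 2 * I) * z ^ 2).im + 2 * b * normSq z ^ 2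
        - c * ((1 + 2 * I) * conj z ^ 2).im := by
  simp [quartic, pow_succ, normSq_apply]
  ring

lemma abs_im_mul_conj_sq_le (z : ℂ) : |((1 + 2 * I) * conj z ^ 2).im| ≤ 3 * normSq z := by
  have him : ((1 + 2 * I) * conj z ^ 2).im = 2 * (z.re ^ 2 - z.im ^ 2) - 2 * z.re * z.im := by
    simp [pow_two]
    ring
  rw [him, normSq_apply, abs_le]
  constructor <;>
    nlinarith [sq_nonneg (z.re + z.im), sq_nonneg (z.re - z.im), sq_nonneg z.re, sq_nonneg z.im]

lemma lt_im_sector_quartic (ha : 0 < a) {z : ℂ} (hy : 0 ≤ z.im) (hyx : z.im ≤ 6 / 5 * z.re)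
    (hz : 1 < normSq z) (hz' : 40 + 4 * |b| + 6 * |c| ≤ a * normSq z) :
    20 < (conj z ^ 2 * (1 + 2 * I) * quartic a b c z).im := by
  rw [im_sector_quartic]
  set r := normSq z
  set D := ((1 + 2 * I) * z ^ 2).im
  set E := ((1 + 2 * I) * conj z ^ 2).im
  have hD : r / 2 ≤ D := normSq_div_two_le_im_mul_sq hy hyx
  have hr : r ≤ r ^ 2 := by nlinarith
  have hlead : (20 + 2 * |b| + 3 * |c|) * r ^ 2 ≤ a * r ^ 2 * D := by
    calc (20 + 2 * |b| + 3 * |c|) * r ^ 2 ≤ a * r / 2 * r ^ 2 := by gcongr; linarith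
      _ = a * r ^ 2 * (r / 2) := by ring
      _ ≤ a * r ^ 2 * D := by gcongr
  have hb : -(2 * |b| * r ^ 2) ≤ 2 * b * r ^ 2 := by nlinarith [neg_abs_le b, sq_nonneg r]
  have hc : c * E ≤ 3 * |c| * r ^ 2 := by
    calc c * E ≤ |c| * |E| := (le_abs_self _).trans (abs_mul c E).le
      _ ≤ |c| * (3 * r ^ 2) := by gcongr; linarith [abs_im_mul_conj_sq_le z]
      _ = 3 * |c| * r ^ 2 := by ring
  nlinarith

lemma eventually_lt_im_sector_quartic (ha : 0 < a) (b c : ℝ) :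
    ∀ᶠ x : ℝ in atTop, ∀ z : ℂ, 0 ≤ z.im → z.im ≤ 6 / 5 * z.re → 2 / 5 * x ≤ z.re →
      20 < (conj z ^ 2 * (1 + 2 * I) * quartic a b c z).im := by
  have hsq : Tendsto (fun x : ℝ => (2 / 5 * x) ^ 2) atTop atTop :=
    (tendsto_pow_atTop two_ne_zero).comp (tendsto_id.const_mul_atTop (by norm_num))
  filter_upwards [eventually_ge_atTop 0, hsq.eventually_gt_atTop 1,
    (hsq.const_mul_atTop ha).eventually_ge_atTop (40 + 4 * |b| + 6 * |c|)]
    with x hx hone hlarge z hy hyx hxz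
  have hnorm : (2 / 5 * x) ^ 2 ≤ normSq z := by
    rw [normSq_apply]
    nlinarith
  exact lt_im_sector_quartic ha hy hyx (hone.trans_le hnorm)
    (hlarge.trans (mul_le_mul_of_nonneg_left hnorm ha.le))

lemma eventually_im_quartic_nonpos (ha : 0 < a) (b c : ℝ) : ∀ᶠ y : ℝ in atTop, ∀ x : ℝ, 0 ≤ x →
    6 / 5 * x ≤ y → (quartic a b c (y * I + x)).im ≤ 0 := by
  have hlarge : Tendsto (fun y : ℝ => 11 / 18 * a * y ^ 2) atTop atTop :=
    (tendsto_pow_atTop two_ne_zero).const_mul_atTop (by positivity)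
  filter_upwards [eventually_ge_atTop 0, hlarge.eventually_ge_atTop b] with y hy hb x hx hxy
  have hre : (y * I + x : ℂ).re = x := by simp
  have him : (y * I + x : ℂ).im = y := by simp
  rw [quartic_im, hre, him]
  have hsq : 11 / 36 * y ^ 2 ≤ y ^ 2 - x ^ 2 := by nlinarith
  refine mul_nonpos_of_nonneg_of_nonpos (by positivity) ?_
  nlinarith [mul_le_mul_of_nonneg_left hsq ha.le]

namespace IsEntireSolution

variable {w : ℂ → ℂ}

lemma eventually_ne_zero_of_le (hw : IsEntireSolution (quartic a b c) w) (ha : 0 < a)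
    (hw₀ : w ≠ 0) (hreal : ∀ x : ℝ, (w x).im = 0) :
    ∀ᶠ x : ℝ in atTop, ∀ y > 0, y ≤ 6 / 5 * x → w (x + y * I) ≠ 0 := by
  filter_upwards [eventually_lt_im_sector_quartic ha b c] with x hx y hy hyx
  exact hw.ne_zero_of_lt_im (continuous_quartic a b c) hw₀ hreal hy hyx hx

lemma eventually_ne_zero_of_ge (hw : IsEntireSolution (quartic a b c) w) (ha : 0 < a)
    (hdecay : ∀ᶠ y : ℝ in atTop, 0 < (deriv w (y * I) * conj (w (y * I))).im) :
    ∀ᶠ y : ℝ in atTop, ∀ x ≥ 0, 6 / 5 * x ≤ y → w (x + y * I) ≠ 0 := by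
  filter_upwards [eventually_im_quartic_nonpos ha b c, hdecay] with y hQ hy x hx hxy
  rw [add_comm]
  exact hw.ne_zero_of_im_nonpos hx (fun s hs => hQ s hs.1 (by linarith [hs.2])) hy

end IsEntireSolution

lemma eq_zero_abs_re_add_abs_im {w : ℂ → ℂ} (heven : ∀ z, w (-z) = w z)
    (hconj : ∀ z, w (conj z) = conj (w z)) {z : ℂ} (hz : w z = 0) :
    w (|z.re| + |z.im| * I) = 0 := by
  have hz' : w (conj z) = 0 := by rw [hconj, hz, map_zero]
  rcases abs_choice z.re with hre | hre <;> rcases abs_choice z.im with him | him <;> rw [hre, him]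
  · rwa [re_add_im]
  · rwa [show (z.re : ℂ) + (-z.im : ℝ) * I = conj z by apply Complex.ext <;> simp]
  · rwa [show ((-z.re : ℝ) : ℂ) + z.im * I = -conj z by apply Complex.ext <;> simp, heven]
  · rwa [show ((-z.re : ℝ) : ℂ) + (-z.im : ℝ) * I = -z by apply Complex.ext <;> simp, heven]

theorem IsEntireSolution.finite_nonreal_zeros {w : ℂ → ℂ}
    (hw : IsEntireSolution (quartic a b c) w) (ha : 0 < a) (heven : ∀ z, w (-z) = w z)
    (hconj : ∀ z, w (conj z) = conj (w z))
    (hdecay : ∀ᶠ y : ℝ in atTop, 0 < (deriv w (y * I) * conj (w (y * I))).im) :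
    {z | w z = 0 ∧ z.im ≠ 0}.Finite := by
  have hw₀ : w ≠ 0 := by
    rintro rfl
    obtain ⟨y, hy⟩ := hdecay.exists
    simp at hy
  have hreal : ∀ x : ℝ, (w x).im = 0 := fun x => by
    rw [← conj_eq_iff_im, ← hconj, conj_ofReal]
  obtain ⟨X, hX⟩ := eventually_atTop.1 (hw.eventually_ne_zero_of_le ha hw₀ hreal)
  obtain ⟨Y, hY⟩ := eventually_atTop.1 (hw.eventually_ne_zero_of_ge ha hdecay)
  refine (finite_setOf_eq_zero_of_norm_le hw.differentiable hw₀ (3 * |X| + 2 * |Y|)).subset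
    fun z ⟨hz, him⟩ => ⟨hz, (norm_le_abs_re_add_abs_im z).trans ?_⟩
  have hzero := eq_zero_abs_re_add_abs_im heven hconj hz
  rcases le_total |z.im| (6 / 5 * |z.re|) with hyx | hxy
  · have hlt : |z.re| < X := not_le.1 fun h => hX _ h _ (abs_pos.2 him) hyx hzero
    linarith [le_abs_self X, abs_nonneg X, abs_nonneg Y]
  · have hlt : |z.im| < Y := not_le.1 fun h => hY _ h _ (abs_nonneg _) hxy hzero
    linarith [le_abs_self Y, abs_nonneg X, abs_nonneg Y]

theorem IsEntireSolution.infinite_zeros {w : ℂ → ℂ} (hw : IsEntireSolution (quartic a b c) w)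
    (ha : 0 < a) (hreal : ∀ x : ℝ, (w x).im = 0) (hw₀ : w 0 ≠ 0) (hw₀' : deriv w 0 = 0) :
    {z | w z = 0}.Infinite := by
  set V : ℝ → ℝ := fun x => -(x ^ 2 * (a * x ^ 2 + b) - c)
  have hV : ∀ x : ℝ, (1 : ℂ) ^ 2 * quartic a b c (x * 1) = -(V x : ℂ) := fun x => by
    simp only [V, quartic]
    push_cast
    ring
  have hsq : Tendsto (fun x : ℝ => x ^ 2) atTop atTop := tendsto_pow_atTop two_ne_zero
  have hgrow : Tendsto (fun x : ℝ => x ^ 2 * (a * x ^ 2 + b)) atTop atTop :=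
    hsq.atTop_mul_atTop₀ (tendsto_atTop_add_const_right _ b (hsq.const_mul_atTop ha))
  have hVneg : ∀ᶠ x in atTop, V x ≤ -1 := by
    filter_upwards [hgrow.eventually_ge_atTop (c + 1)] with x hx
    linarith
  have hzeros := infinite_setOf_eq_zero_of_hasDerivAt (hw.hasDerivAt_re_ray 1)
    (fun x => hw.hasDerivAt_re_deriv_ray (hV x)) (by fun_prop)
    (by simpa using fun h => hw₀ (Complex.ext h (by simpa using hreal 0)))
    (by simp [hw₀']) hVneg
  refine (hzeros.image ofReal_injective.injOn).mono ?_
  rintro _ ⟨x, hx, rfl⟩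
  exact Complex.ext (by simpa using hx) (hreal x)

end Quartic

section EvenSolution

variable (a b c : ℝ)

/-- The Taylor coefficients of `-(a z⁴ + b z² - c)`, with `c` as the parameter. -/
def quarticCoeff : ℕ → ℝ → ℝ
  | 0 => fun c => c
  | 2 => fun _ => -b
  | 4 => fun _ => -a
  | _ => fun _ => 0

/-- The even solution of `w'' + (a z⁴ + b z² - c) w = 0` with `w 0 = 1`. -/
noncomputable def evenSolution (c : ℝ) : ℂ → ℂ := powerSum (solutionCoeff (quarticCoeff a b)) c

lemma isEntireFamily_quarticCoeff : IsEntireFamily (quarticCoeff a b) :=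
  IsEntireFamily.of_eq_zero (N := 5)
    (fun n => by unfold quarticCoeff; split <;> fun_prop)
    (fun n hn x => by unfold quarticCoeff; split <;> first | omega | rfl)

lemma powerSum_quarticCoeff (z : ℂ) : powerSum (quarticCoeff a b) c z = -quartic a b c z := by
  rw [powerSum, tsum_eq_sum (s := Finset.range 5) fun n hn => ?_]
  · simp [Finset.sum_range_succ, quarticCoeff, quartic]
    ring
  · rw [Finset.mem_range] at hn
    unfold quarticCoeff
    split <;> first | omega | simp

lemma isEntireFamily_solutionCoeff_quarticCoeff :
    IsEntireFamily (solutionCoeff (quarticCoeff a b)) :=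
  (isEntireFamily_quarticCoeff a b).solutionCoeff

lemma hasDerivAt_evenSolution (z : ℂ) : HasDerivAt (evenSolution a b c)
    (powerSum (derivCoeff (solutionCoeff (quarticCoeff a b))) c z) z :=
  (isEntireFamily_solutionCoeff_quarticCoeff a b).hasDerivAt_powerSum c z

lemma deriv_evenSolution : deriv (evenSolution a b c) =
    powerSum (derivCoeff (solutionCoeff (quarticCoeff a b))) c :=
  funext fun z => (hasDerivAt_evenSolution a b c z).deriv

lemma isEntireSolution_evenSolution :
    IsEntireSolution (quartic a b c) (evenSolution a b c) := by
  refine isEntireSolution_of_hasDerivAt (hasDerivAt_evenSolution a b c) fun z => ?_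
  refine ((isEntireFamily_solutionCoeff_quarticCoeff a b).derivCoeff.hasDerivAt_powerSum
    c z).congr_deriv ?_
  rw [(isEntireFamily_quarticCoeff a b).powerSum_derivCoeff_derivCoeff_solutionCoeff,
    powerSum_quarticCoeff, neg_mul, evenSolution]

lemma evenSolution_zero : evenSolution a b c 0 = 1 := by
  rw [evenSolution, powerSum_zero, solutionCoeff, ofReal_one]

lemma deriv_evenSolution_zero : deriv (evenSolution a b c) 0 = 0 := by
  rw [deriv_evenSolution, powerSum_zero, derivCoeff, solutionCoeff, mul_zero, ofReal_zero]

lemma evenSolution_neg (z : ℂ) : evenSolution a b c (-z) = evenSolution a b c z :=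
  powerSum_neg_of_odd (solutionCoeff_eq_zero_of_odd fun n hn => by
    unfold quarticCoeff; split <;> first | rfl | (exact absurd hn (by decide))) z

lemma evenSolution_conj (z : ℂ) : evenSolution a b c (conj z) = conj (evenSolution a b c z) :=
  powerSum_conj _ c z

lemma evenSolution_ofReal_im (x : ℝ) : (evenSolution a b c x).im = 0 := by
  rw [← conj_eq_iff_im, ← evenSolution_conj, conj_ofReal]

lemma evenSolution_ofReal_mul_I_im (t : ℝ) : (evenSolution a b c (t * I)).im = 0 := by
  rw [← conj_eq_iff_im, ← evenSolution_conj, map_mul, conj_ofReal, conj_I, mul_neg,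
    evenSolution_neg]

lemma continuous_evenSolution : Continuous fun p : ℝ × ℂ => evenSolution a b p.1 p.2 :=
  (isEntireFamily_solutionCoeff_quarticCoeff a b).continuous_powerSum

lemma continuous_deriv_evenSolution :
    Continuous fun p : ℝ × ℂ => deriv (evenSolution a b p.1) p.2 := by
  simpa only [deriv_evenSolution] using
    (isEntireFamily_solutionCoeff_quarticCoeff a b).derivCoeff.continuous_powerSum

variable {a}

theorem exists_gt_eventually_im_deriv_mul_conj_evenSolution_pos (ha : 0 < a) (c₀ : ℝ) :
    ∃ c > c₀, ∀ᶠ y : ℝ in atTop,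
      0 < (deriv (evenSolution a b c) (y * I) * conj (evenSolution a b c (y * I))).im := by
  set U : ℝ → ℝ := fun t => t ^ 2 * (a * t ^ 2 - b)
  have hsq : Tendsto (fun t : ℝ => t ^ 2) atTop atTop := tendsto_pow_atTop two_ne_zero
  have hU : Tendsto U atTop atTop :=
    hsq.atTop_mul_atTop₀ (tendsto_atTop_add_const_right _ (-b) (hsq.const_mul_atTop ha))
  have hV : ∀ c t : ℝ, I ^ 2 * quartic a b c (t * I) = -((U t - c : ℝ) : ℂ) := fun c t => by
    simp only [U, quartic, mul_pow, I_sq, I_pow_four]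
    push_cast
    ring
  have hray : Continuous fun q : ℝ × ℝ => (q.1, (q.2 : ℂ) * I) := by fun_prop
  obtain ⟨c, hc, hneg⟩ := exists_gt_eventually_mul_neg (by fun_prop) hU
    (fun c => (isEntireSolution_evenSolution a b c).hasDerivAt_re_ray I)
    (fun c t => (isEntireSolution_evenSolution a b c).hasDerivAt_re_deriv_ray (hV c t))
    (continuous_re.comp ((continuous_evenSolution a b).comp hray))
    (continuous_re.comp (continuous_const.mul ((continuous_deriv_evenSolution a b).comp hray)))
    (fun c => by simp [evenSolution_zero]) (fun c => by simp [deriv_evenSolution_zero]) c₀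
  refine ⟨c, hc, hneg.mono fun t ht => ?_⟩
  simp only [I_mul_re] at ht
  rw [mul_im, conj_re, conj_im, evenSolution_ofReal_mul_I_im]
  linarith

end EvenSolution

theorem stmt_18_general (a b : ℝ) (ha : 0 < a) :
    ¬BddAbove {c : ℝ | ∃ w : ℂ → ℂ,
        Differentiable ℂ w ∧ w ≠ 0 ∧
        (∀ z : ℂ, iteratedDeriv 2 w z
            + ((a : ℂ) * z ^ 4 + (b : ℂ) * z ^ 2 - (c : ℂ)) * w z = 0) ∧
        {z : ℂ | w z = 0}.Infinite ∧
        {z : ℂ | w z = 0 ∧ z.im ≠ 0}.Finite} := by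
  refine not_bddAbove_iff.2 fun c₀ => ?_
  obtain ⟨c, hc, hdecay⟩ := exists_gt_eventually_im_deriv_mul_conj_evenSolution_pos b ha c₀
  have hw := isEntireSolution_evenSolution a b c
  have hw₀ : evenSolution a b c 0 ≠ 0 := by simp [evenSolution_zero]
  exact ⟨c, ⟨evenSolution a b c, hw.differentiable, ne_of_apply_ne (· 0) hw₀, hw.ode,
    hw.infinite_zeros ha (evenSolution_ofReal_im a b c) hw₀ (deriv_evenSolution_zero a b c),
    hw.finite_nonreal_zeros ha (evenSolution_neg a b c) (evenSolution_conj a b c) hdecay⟩, hc⟩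

/-- For `a > 0` and `b ≥ 0`, there are infinitely many real `c` such that
`w'' + (a·z⁴ + b·z² − c)·w = 0` has a nonzero entire solution with infinitely many zeros,
all but finitely many of them real. -/
theorem stmt_18 (a b : ℝ) (ha : 0 < a) (hb : 0 ≤ b) :
    {c : ℝ | ∃ w : ℂ → ℂ,
        Differentiable ℂ w ∧ w ≠ 0 ∧
        (∀ z : ℂ, iteratedDeriv 2 w z
            + ((a : ℂ) * z ^ 4 + (b : ℂ) * z ^ 2 - (c : ℂ)) * w z = 0) ∧
        {z : ℂ | w z = 0}.Infinite ∧
        {z : ℂ | w z = 0 ∧ z.im ≠ 0}.Finite}.Infinite :=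
  Set.infinite_of_not_bddAbove (stmt_18_general a b ha)
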